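/- Let Ω be real-analytic on a neighborhood of the origin in ℝ³ with Ω(0) = 0, ∂ᵢΩ(0) = 0, ∂ᵢ∂ⱼΩ(0) = 2δᵢⱼ, and suppose that for every n ≥ 3 the symmetric trace-free part of ∂_{j₁}⋯∂_{jₙ}Ω vanishes at 0. Then Ω = r²·f_Ω on a neighborhood of the origin, where f_Ω is real-analytic, f_Ω(0) = 1, and r² = x₁² + x₂² + x₃². -/

import Mathlib

/-- The partial derivative `∂ᵢ f` in Cartesian coordinates on ℝ³. -/
noncomputable def pd (i : Fin 3) (f : (Fin 3 → ℝ) → ℝ) (x : Fin 3 → ℝ) : ℝ :=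
  fderiv ℝ f x (Pi.single i 1)

/-! The leading form `ρ = r²` of `Ω` is homogeneous and coercive, so the quotients of the Taylor
terms of `Ω` by `ρ` are homogeneous polynomials whose values on the unit sphere are bounded by the
norms of these terms. Polarization turns this into a bound on the operator norms of the associated
symmetric multilinear maps, at the cost of a factor `(2e)ⁿ`, which only shrinks the radius of
convergence: the quotients are the Taylor terms of an analytic function. -/

open Finset Filter
open scoped Nat Topology ContDiff

section Polarization

variable {R ι M N : Type*} [CommRing R] [Fintype ι] [DecidableEq ι]
  [AddCommGroup M] [Module R M] [AddCommGroup N] [Module R N]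

-- Inclusion-exclusion: the maps `ι → ι` missing no `i` are the permutations, and those missing
-- every `i ∈ s` are the index functions in the multilinear expansion of `f (∑ i ∈ sᶜ, v i, …)`.
theorem sum_neg_one_pow_smul_multilinear_sum_compl (f : MultilinearMap R (fun _ : ι => M) N)
    (v : ι → M) :
    ∑ s : Finset ι, (-1 : ℤ) ^ #s • f (fun _ => ∑ i ∈ sᶜ, v i) =
      ∑ σ : Equiv.Perm ι, f (v ∘ σ) := by
  let missing (i : ι) : Finset (ι → ι) := {r | ∀ j, r j ≠ i}
  have missing_inf (s : Finset ι) : s.inf missing = Fintype.piFinset fun _ => sᶜ := by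
    ext r
    simp only [missing, Finset.mem_inf, mem_filter_univ, Fintype.mem_piFinset, mem_compl]
    grind
  have mem_surj (r : ι → ι) :
      (r ∈ univ.inf fun i => (missing i)ᶜ) ↔ Function.Surjective r := by
    simp [missing, Finset.mem_inf, Function.Surjective]
  calc ∑ s : Finset ι, (-1 : ℤ) ^ #s • f (fun _ => ∑ i ∈ sᶜ, v i)
      = ∑ s ∈ univ.powerset, (-1 : ℤ) ^ #s • ∑ r ∈ s.inf missing, f (v ∘ r) := by
        rw [powerset_univ]
        refine sum_congr rfl fun s _ => ?_
        rw [missing_inf, f.map_sum_finset (fun _ i => v i) fun _ => sᶜ]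
        rfl
    _ = ∑ r ∈ univ.inf fun i => (missing i)ᶜ, f (v ∘ r) :=
        (inclusion_exclusion_sum_inf_compl univ missing fun r => f (v ∘ r)).symm
    _ = ∑ σ : Equiv.Perm ι, f (v ∘ σ) := by
        refine (sum_bij (fun (σ : Equiv.Perm ι) _ => (σ : ι → ι)) (fun σ _ => ?_)
          (fun σ _ τ _ h => DFunLike.coe_injective h) (fun r hr => ?_) fun σ _ => rfl).symm
        · exact (mem_surj σ).2 σ.surjective
        · have hr' := Finite.surjective_iff_bijective.1 ((mem_surj r).1 hr)
          exact ⟨Equiv.ofBijective r hr', mem_univ _, rfl⟩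

theorem factorial_smul_symmetric_apply_eq_sum (f : MultilinearMap R (fun _ : ι => M) N)
    (hf : ∀ (σ : Equiv.Perm ι) v, f (v ∘ σ) = f v) (v : ι → M) :
    (Fintype.card ι)! • f v = ∑ s : Finset ι, (-1 : ℤ) ^ #s • f (fun _ => ∑ i ∈ sᶜ, v i) := by
  simp [sum_neg_one_pow_smul_multilinear_sum_compl, hf, Fintype.card_perm]

end Polarization

section Norm

variable {𝕜 ι E F : Type*} [RCLike 𝕜] [Fintype ι]
  [NormedAddCommGroup E] [NormedSpace 𝕜 E] [NormedAddCommGroup F] [NormedSpace 𝕜 F]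

theorem multilinear_opNorm_le_of_forall_norm_le_one
    (f : ContinuousMultilinearMap 𝕜 (fun _ : ι => E) F) {C : ℝ}
    (h : ∀ v, (∀ i, ‖v i‖ ≤ 1) → ‖f v‖ ≤ C) : ‖f‖ ≤ C := by
  have hC : 0 ≤ C := (norm_nonneg _).trans (h 0 (by simp))
  refine f.opNorm_le_bound hC fun v => ?_
  let u (i : ι) : E := ((‖v i‖ : 𝕜)⁻¹) • v i
  have hv : v = fun i => (‖v i‖ : 𝕜) • u i := by
    ext i
    rcases eq_or_ne (v i) 0 with hi | hi
    · simp [u, hi]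
    · simp [u, hi]
  have hu (i : ι) : ‖u i‖ ≤ 1 := by
    simpa [u, norm_smul] using inv_mul_le_one
  calc ‖f v‖ = (∏ i, ‖v i‖) * ‖f u‖ := by
        conv_lhs => rw [hv, f.map_smul_univ, norm_smul]
        simp
    _ ≤ C * ∏ i, ‖v i‖ := by
        rw [mul_comm]
        gcongr
        exact h u hu

theorem natCast_pow_self_le_exp_pow_mul_factorial (n : ℕ) :
    (n : ℝ) ^ n ≤ Real.exp 1 ^ n * n ! := by
  rw [← div_le_iff₀ (by positivity), ← Real.exp_nat_mul, mul_one]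
  exact Real.pow_div_factorial_le_exp _ n.cast_nonneg n

theorem symmetric_opNorm_le_of_norm_apply_const_le
    (f : ContinuousMultilinearMap 𝕜 (fun _ : ι => E) F)
    (hf : ∀ (σ : Equiv.Perm ι) v, f (v ∘ σ) = f v) {C : ℝ} (hC : 0 ≤ C)
    (h : ∀ x, ‖f fun _ => x‖ ≤ C * ‖x‖ ^ Fintype.card ι) :
    ‖f‖ ≤ C * (2 * Real.exp 1) ^ Fintype.card ι := by
  classical
  set n := Fintype.card ι
  refine multilinear_opNorm_le_of_forall_norm_le_one f fun v hv => ?_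
  have term_le (s : Finset ι) :
      ‖(-1 : ℤ) ^ #s • f (fun _ => ∑ i ∈ sᶜ, v i)‖ ≤ C * n ^ n := by
    have norm_sum_le_card : ‖∑ i ∈ sᶜ, v i‖ ≤ n := calc
      ‖∑ i ∈ sᶜ, v i‖ ≤ ∑ i ∈ sᶜ, 1 := norm_sum_le_of_le _ fun i _ => hv i
      _ = (#sᶜ : ℝ) := by simp
      _ ≤ n := mod_cast card_le_univ _
    calc ‖(-1 : ℤ) ^ #s • f (fun _ => ∑ i ∈ sᶜ, v i)‖ = ‖f (fun _ => ∑ i ∈ sᶜ, v i)‖ := by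
          rcases neg_one_pow_eq_or ℤ #s with hs | hs <;> simp [hs]
      _ ≤ C * ‖∑ i ∈ sᶜ, v i‖ ^ n := h _
      _ ≤ C * n ^ n := by gcongr
  refine le_of_mul_le_mul_left ?_ (show 0 < (n ! : ℝ) by positivity)
  calc (n ! : ℝ) * ‖f v‖ = ‖n ! • f v‖ := by rw [RCLike.norm_nsmul 𝕜, nsmul_eq_mul]
    _ = ‖∑ s : Finset ι, (-1 : ℤ) ^ #s • f (fun _ => ∑ i ∈ sᶜ, v i)‖ :=
        congrArg _ (factorial_smul_symmetric_apply_eq_sum f.toMultilinearMap hf v)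
    _ ≤ ∑ _s : Finset ι, C * n ^ n := norm_sum_le_of_le _ fun s _ => term_le s
    _ = 2 ^ n * (C * n ^ n) := by simp [n]
    _ ≤ 2 ^ n * (C * (Real.exp 1 ^ n * n !)) := by
        gcongr
        exact natCast_pow_self_le_exp_pow_mul_factorial n
    _ = n ! * (C * (2 * Real.exp 1) ^ n) := by ring

end Norm

section Homogeneous

theorem iteratedFDeriv_zero_apply_const_of_homogeneous {𝕜 E F : Type*}
    [NontriviallyNormedField 𝕜] [NormedAddCommGroup E] [NormedSpace 𝕜 E]
    [NormedAddCommGroup F] [NormedSpace 𝕜 F] {Q : E → F} {n : ℕ} (hQ : ContDiff 𝕜 n Q)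
    (hom : ∀ (t : 𝕜) x, Q (t • x) = t ^ n • Q x) (x : E) :
    iteratedFDeriv 𝕜 n Q 0 (fun _ => x) = n ! • Q x := by
  let line : 𝕜 →L[𝕜] E := ContinuousLinearMap.toSpanSingleton 𝕜 x
  have Q_line : Q ∘ line = fun t : 𝕜 => t ^ n • Q x := by
    ext t
    simp [line, hom]
  calc iteratedFDeriv 𝕜 n Q 0 (fun _ => x)
      = iteratedFDeriv 𝕜 n (Q ∘ line) 0 (fun _ => 1) := by
        rw [line.iteratedFDeriv_comp_right hQ 0 le_rfl]
        simp [line]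
    _ = iteratedDeriv n (fun t : 𝕜 => t ^ n • Q x) 0 := by
        rw [Q_line, iteratedDeriv_eq_iteratedFDeriv]
    _ = n ! • Q x := by
        rw [iteratedDeriv_smul_const (by fun_prop), iteratedDeriv_fun_pow_zero, if_pos rfl,
          Nat.cast_smul_eq_nsmul]

variable {𝕜 E F : Type*} [RCLike 𝕜] [NormedAddCommGroup E] [NormedSpace 𝕜 E]
  [NormedAddCommGroup F] [NormedSpace 𝕜 F]

theorem exists_apply_const_eq_of_homogeneous {Q : E → F} {n : ℕ} (hQ : ContDiff 𝕜 ω Q)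
    (hom : ∀ (t : 𝕜) x, Q (t • x) = t ^ n • Q x) {C : ℝ} (hC : 0 ≤ C)
    (hle : ∀ x, ‖Q x‖ ≤ C * ‖x‖ ^ n) :
    ∃ q : E [×n]→L[𝕜] F, (∀ x, q (fun _ => x) = Q x) ∧ ‖q‖ ≤ C * (2 * Real.exp 1) ^ n := by
  let q : E [×n]→L[𝕜] F := (n ! : 𝕜)⁻¹ • iteratedFDeriv 𝕜 n Q 0
  have q_diag (x : E) : q (fun _ => x) = Q x := by
    have := iteratedFDeriv_zero_apply_const_of_homogeneous (hQ.of_le le_top) hom x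
    have : (n ! : 𝕜) ≠ 0 := mod_cast n.factorial_ne_zero
    simp_all [q, ← Nat.cast_smul_eq_nsmul 𝕜]
  have q_symm (σ : Equiv.Perm (Fin n)) (v : Fin n → E) : q (v ∘ σ) = q v :=
    congrArg ((n ! : 𝕜)⁻¹ • ·) (hQ.contDiffAt.iteratedFDeriv_comp_perm v σ)
  refine ⟨q, q_diag, ?_⟩
  simpa using symmetric_opNorm_le_of_norm_apply_const_le q q_symm hC (by simpa [q_diag] using hle)

end Homogeneous

section Quotient

variable {𝕜 E F : Type*} [RCLike 𝕜] [NormedAddCommGroup E] [NormedSpace 𝕜 E] [Nontrivial E]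
  [NormedAddCommGroup F] [NormedSpace 𝕜 F] {ρ : E → 𝕜} {d n : ℕ} {c : ℝ}
  {p : E [×(n + d)]→L[𝕜] F} {Q : E → F}

theorem homogeneous_of_apply_const_eq_smul (hc : 0 < c) (hρ : ∀ x, c * ‖x‖ ^ d ≤ ‖ρ x‖)
    (ρ_hom : ∀ (t : 𝕜) x, ρ (t • x) = t ^ d * ρ x) (hQ : Continuous Q)
    (hp : ∀ x, p (fun _ => x) = ρ x • Q x) (t : 𝕜) (x : E) : Q (t • x) = t ^ n • Q x := by
  have : (𝓝[≠] (0 : E)).NeBot := Module.punctured_nhds_neBot 𝕜 E 0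
  suffices (fun y : 𝕜 × E => Q (y.1 • y.2)) = fun y => y.1 ^ n • Q y.2 from congrFun this (t, x)
  refine Continuous.ext_on ((dense_compl_singleton 0).prod (dense_compl_singleton 0))
    (by fun_prop) (by fun_prop) ?_
  rintro ⟨t, x⟩ ⟨ht, hx⟩
  have ht : t ≠ 0 := ht
  have : 0 < ‖x‖ := norm_pos_iff.2 hx
  have hρx : ρ x ≠ 0 := norm_pos_iff.1 ((by positivity : 0 < c * ‖x‖ ^ d).trans_le (hρ x))
  have : (t ^ d * ρ x) • Q (t • x) = (t ^ d * ρ x) • t ^ n • Q x := calc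
    (t ^ d * ρ x) • Q (t • x) = p fun _ => t • x := by rw [hp, ρ_hom]
    _ = t ^ (n + d) • ρ x • Q x := by simpa [hp] using p.map_smul_univ (fun _ => t) fun _ => x
    _ = (t ^ d * ρ x) • t ^ n • Q x := by simp only [smul_smul]; ring_nf
  exact smul_right_injective F (mul_ne_zero (pow_ne_zero d ht) hρx) this

theorem norm_le_of_apply_const_eq_smul (hc : 0 < c) (hρ : ∀ x, c * ‖x‖ ^ d ≤ ‖ρ x‖)
    (hQ : Continuous Q) (hp : ∀ x, p (fun _ => x) = ρ x • Q x) (x : E) :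
    ‖Q x‖ ≤ ‖p‖ / c * ‖x‖ ^ n := by
  have : (𝓝[≠] (0 : E)).NeBot := Module.punctured_nhds_neBot 𝕜 E 0
  suffices closure {0}ᶜ ⊆ {x | ‖Q x‖ ≤ ‖p‖ / c * ‖x‖ ^ n} from this (dense_compl_singleton 0 x)
  refine (isClosed_le (by fun_prop) (by fun_prop)).closure_subset_iff.2 fun x hx => ?_
  have : 0 < ‖x‖ := norm_pos_iff.2 hx
  refine le_of_mul_le_mul_left ?_ (show 0 < c * ‖x‖ ^ d by positivity)
  calc c * ‖x‖ ^ d * ‖Q x‖ ≤ ‖ρ x‖ * ‖Q x‖ := by gcongr; exact hρ x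
    _ = ‖p fun _ => x‖ := by rw [hp, norm_smul]
    _ ≤ ‖p‖ * ‖x‖ ^ (n + d) := by simpa using p.le_opNorm fun _ => x
    _ = c * ‖x‖ ^ d * (‖p‖ / c * ‖x‖ ^ n) := by field_simp; ring

theorem exists_apply_const_eq_smul_of_smul (hc : 0 < c) (hρ : ∀ x, c * ‖x‖ ^ d ≤ ‖ρ x‖)
    (ρ_hom : ∀ (t : 𝕜) x, ρ (t • x) = t ^ d * ρ x) (hQ : ContDiff 𝕜 ω Q)
    (hp : ∀ x, p (fun _ => x) = ρ x • Q x) :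
    ∃ q : E [×n]→L[𝕜] F, (∀ x, q (fun _ => x) = Q x) ∧
      ‖q‖ ≤ ‖p‖ / c * (2 * Real.exp 1) ^ n :=
  exists_apply_const_eq_of_homogeneous hQ
    (homogeneous_of_apply_const_eq_smul hc hρ ρ_hom hQ.continuous hp) (by positivity)
    (norm_le_of_apply_const_eq_smul hc hρ hQ.continuous hp)

end Quotient

section PowerSeries

theorem radius_pos_of_norm_le_mul_pow {𝕜 E F : Type*} [NontriviallyNormedField 𝕜]
    [NormedAddCommGroup E] [NormedSpace 𝕜 E] [NormedAddCommGroup F] [NormedSpace 𝕜 F]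
    {q : FormalMultilinearSeries 𝕜 E F} {C r : ℝ} (hr : 0 < r) (hq : ∀ n, ‖q n‖ ≤ C * r ^ n) :
    0 < q.radius := by
  lift r to NNReal using hr.le
  refine (ENNReal.coe_pos.2 (inv_pos.2 hr)).trans_le (q.le_radius_of_bound C fun n => ?_)
  calc ‖q n‖ * (r⁻¹ : NNReal) ^ n ≤ C * r ^ n * (r⁻¹ : NNReal) ^ n := by gcongr; exact hq n
    _ = C := by rw [mul_assoc, ← mul_pow, NNReal.coe_inv, mul_inv_cancel₀ hr.ne', one_pow, mul_one]

variable {𝕜 E F : Type*} [RCLike 𝕜] [NormedAddCommGroup E] [NormedSpace 𝕜 E]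
  [NormedAddCommGroup F] [NormedSpace 𝕜 F]

theorem exists_series_apply_const_eq_of_smul [Nontrivial E] {p : FormalMultilinearSeries 𝕜 E F}
    {ρ : E → 𝕜} {d : ℕ} {c : ℝ} {Q : ℕ → E → F}
    (hrad : 0 < p.radius) (hc : 0 < c) (hρ : ∀ x, c * ‖x‖ ^ d ≤ ‖ρ x‖)
    (ρ_hom : ∀ (t : 𝕜) x, ρ (t • x) = t ^ d * ρ x) (hQ : ∀ n, ContDiff 𝕜 ω (Q n))
    (hp : ∀ n x, p (n + d) (fun _ => x) = ρ x • Q n x) :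
    ∃ q : FormalMultilinearSeries 𝕜 E F, 0 < q.radius ∧ ∀ n x, q n (fun _ => x) = Q n x := by
  choose q q_diag q_le using fun n =>
    exists_apply_const_eq_smul_of_smul hc hρ ρ_hom (hQ n) (hp n)
  obtain ⟨C, r, -, hr, p_le⟩ := p.le_mul_pow_of_radius_pos hrad
  refine ⟨q, radius_pos_of_norm_le_mul_pow (C := C * r ^ d / c) (r := r * (2 * Real.exp 1))
    (by positivity) fun n => ?_, q_diag⟩
  calc ‖q n‖ ≤ ‖p (n + d)‖ / c * (2 * Real.exp 1) ^ n := q_le n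
    _ ≤ C * r ^ (n + d) / c * (2 * Real.exp 1) ^ n := by gcongr; exact p_le _
    _ = C * r ^ d / c * (r * (2 * Real.exp 1)) ^ n := by ring

theorem eventually_eq_smul_sum_of_apply_const_eq_smul [CompleteSpace F] {f : E → F}
    {p q : FormalMultilinearSeries 𝕜 E F} {ρ : E → 𝕜} {d : ℕ}
    (hf : HasFPowerSeriesAt f p 0) (hq : 0 < q.radius)
    (hlow : ∀ n < d, ∀ x, p n (fun _ => x) = 0)
    (hp : ∀ n x, p (n + d) (fun _ => x) = ρ x • q n fun _ => x) :
    ∀ᶠ x in 𝓝 0, f x = ρ x • q.sum x := by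
  filter_upwards [hf.eventually_hasSum, Metric.eball_mem_nhds 0 hq] with x hfx hx
  have tail : HasSum (fun n => p (n + d) fun _ => x) (f x) := by
    have := (hasSum_nat_add_iff' d).2 hfx
    rwa [sum_eq_zero fun n hn => hlow n (mem_range.1 hn) x, sub_zero, zero_add] at this
  simp only [hp] at tail
  exact tail.unique ((q.hasSum hx).const_smul (ρ x))

theorem apply_const_eq_inv_factorial_smul_iteratedFDeriv [CompleteSpace F]
    {f : E → F} {p : FormalMultilinearSeries 𝕜 E F} {a : E}
    (hf : HasFPowerSeriesAt f p a) (n : ℕ) (x : E) :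
    p n (fun _ => x) = (n ! : 𝕜)⁻¹ • iteratedFDeriv 𝕜 n f a fun _ => x := by
  obtain ⟨r, hr⟩ := hf
  rw [← hr.factorial_smul x n, ← Nat.cast_smul_eq_nsmul 𝕜,
    inv_smul_smul₀ (mod_cast n.factorial_ne_zero)]

theorem Omega_eq_r_sq_mul_analytic_general [Nontrivial E] {Ω ρ : E → 𝕜} {d : ℕ} {c : ℝ}
    (hc : 0 < c) (hρ : ∀ x, c * ‖x‖ ^ d ≤ ‖ρ x‖) (hΩ : AnalyticAt 𝕜 Ω 0)
    (hlow : ∀ n < d, ∀ x, iteratedFDeriv 𝕜 n Ω 0 (fun _ => x) = 0)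
    (hd : ∀ x, iteratedFDeriv 𝕜 d Ω 0 (fun _ => x) = d ! * ρ x)
    (hhigh : ∀ n > d, ∃ Q : E → 𝕜, ContDiff 𝕜 ω Q ∧
      ∀ x, iteratedFDeriv 𝕜 n Ω 0 (fun _ => x) = ρ x * Q x) :
    ∃ f : E → 𝕜, AnalyticAt 𝕜 f 0 ∧ f 0 = 1 ∧ ∀ᶠ x in 𝓝 0, Ω x = ρ x * f x := by
  obtain ⟨p, hp⟩ := hΩ
  have p_diag := apply_const_eq_inv_factorial_smul_iteratedFDeriv hp
  have p_d (x : E) : p d (fun _ => x) = ρ x := by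
    simp [p_diag, hd, Nat.factorial_ne_zero]
  have ρ_hom (t : 𝕜) (x : E) : ρ (t • x) = t ^ d * ρ x := by
    simpa [p_d] using (p d).map_smul_univ (fun _ => t) fun _ => x
  have quotient_exists (n : ℕ) : ∃ Q : E → 𝕜, ContDiff 𝕜 ω Q ∧ (n = 0 → Q = 1) ∧
      ∀ x, p (n + d) (fun _ => x) = ρ x • Q x := by
    rcases n.eq_zero_or_pos with rfl | hn
    · refine ⟨1, contDiff_const, fun _ => rfl, fun x => ?_⟩
      simpa using (congrArg (fun m => p m fun _ => x) (zero_add d)).trans (p_d x)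
    · obtain ⟨Q, hQ, hQρ⟩ := hhigh (n + d) (by omega)
      refine ⟨((n + d)! : 𝕜)⁻¹ • Q, contDiff_const.smul hQ, by omega, fun x => ?_⟩
      simp [p_diag, hQρ, mul_left_comm]
  choose Q hQ Q_zero hQp using quotient_exists
  obtain ⟨q, hq, q_diag⟩ := exists_series_apply_const_eq_of_smul hp.radius_pos hc hρ ρ_hom hQ hQp
  have q_sum := q.hasFPowerSeriesOnBall hq
  refine ⟨q.sum, q_sum.analyticAt, ?_, ?_⟩
  · rw [← q_sum.coeff_zero fun _ => 0, q_diag, Q_zero 0 rfl, Pi.one_apply]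
  · refine eventually_eq_smul_sum_of_apply_const_eq_smul (d := d) hp hq
      (fun n hn x => ?_) fun n x => ?_
    · rw [p_diag, hlow n hn, smul_zero]
    · rw [hQp, q_diag]

end PowerSeries

section Coordinates

theorem norm_sq_le_sum_sq {ι : Type*} [Fintype ι] (x : ι → ℝ) : ‖x‖ ^ 2 ≤ ∑ i, x i ^ 2 := by
  have norm_le : ‖x‖ ≤ √(∑ i, x i ^ 2) := (pi_norm_le_iff_of_nonneg (Real.sqrt_nonneg _)).2
    fun i => Real.abs_le_sqrt (single_le_sum (f := fun i => x i ^ 2) (fun _ _ => sq_nonneg _)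
      (mem_univ i))
  exact (Real.le_sqrt (norm_nonneg x) (by positivity)).1 norm_le

variable {f : (Fin 3 → ℝ) → ℝ} {a : Fin 3 → ℝ}

theorem fderiv_apply_eq_sum_pd (x : Fin 3 → ℝ) : fderiv ℝ f a x = ∑ i, x i * pd i f a := by
  conv_lhs => rw [pi_eq_sum_univ' x]
  simp [pd]

theorem iteratedFDeriv_two_apply_const_eq_sum_pd (hf : DifferentiableAt ℝ (fderiv ℝ f) a)
    (x : Fin 3 → ℝ) :
    iteratedFDeriv ℝ 2 f a (fun _ => x) = ∑ i, ∑ j, x i * x j * pd i (pd j f) a := by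
  have fderiv_pd (j : Fin 3) : fderiv ℝ (pd j f) a x =
      fderiv ℝ (fderiv ℝ f) a x (Pi.single j 1) := by
    unfold pd
    rw [fderiv_clm_apply hf (differentiableAt_const _)]
    simp
  calc iteratedFDeriv ℝ 2 f a (fun _ => x)
      = ∑ j, x j * fderiv ℝ (fderiv ℝ f) a x (Pi.single j 1) := by
        rw [iteratedFDeriv_two_apply]
        conv_lhs => enter [2]; rw [pi_eq_sum_univ' x]
        simp only [map_sum, map_smul, smul_eq_mul]
    _ = ∑ j, ∑ i, x i * x j * pd i (pd j f) a := by
        simp only [← fderiv_pd, fderiv_apply_eq_sum_pd, mul_sum, mul_left_comm, mul_assoc]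
    _ = ∑ i, ∑ j, x i * x j * pd i (pd j f) a := sum_comm

theorem iteratedFDeriv_apply_const_eq_zero_of_pd_eq_zero (h0 : f a = 0) (h1 : ∀ i, pd i f a = 0) :
    ∀ n < 2, ∀ x, iteratedFDeriv ℝ n f a (fun _ => x) = 0 := by
  intro n hn x
  interval_cases n
  · simpa using h0
  · simp [fderiv_apply_eq_sum_pd, h1]

theorem iteratedFDeriv_two_apply_const_eq_two_mul_sum_sq (hf : DifferentiableAt ℝ (fderiv ℝ f) a)
    (h2 : ∀ i j, pd i (pd j f) a = if i = j then 2 else 0) (x : Fin 3 → ℝ) :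
    iteratedFDeriv ℝ 2 f a (fun _ => x) = 2 * ∑ i, x i ^ 2 := by
  simp [iteratedFDeriv_two_apply_const_eq_sum_pd hf, h2, mul_sum, sq, mul_comm]

end Coordinates

/-- if `Ω` is real-analytic near `0 ∈ ℝ³` with `Ω(0) = 0`,
`∂ᵢΩ(0) = 0`, `∂ᵢ∂ⱼΩ(0) = 2δᵢⱼ`, and for every `n ≥ 3` the symmetric trace-free
part of `∂_{j₁}⋯∂_{jₙ}Ω(0)` vanishes (encoded as: the homogeneous polynomial
`x ↦ ∂ⁿΩ(0)(x,…,x)` is divisible by `r² = ∑ xᵢ²`), then `Ω = r² f_Ω` near the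
origin with `f_Ω` analytic and `f_Ω(0) = 1`. -/
theorem Omega_eq_r_sq_mul_analytic
    (Ω : (Fin 3 → ℝ) → ℝ) (hΩ : AnalyticAt ℝ Ω 0)
    (h0 : Ω 0 = 0)
    (h1 : ∀ i, pd i Ω 0 = 0)
    (h2 : ∀ i j, pd i (pd j Ω) 0 = if i = j then 2 else 0)
    (htf : ∀ n : ℕ, 3 ≤ n → ∃ Q : MvPolynomial (Fin 3) ℝ, ∀ x : Fin 3 → ℝ,
      iteratedFDeriv ℝ n Ω 0 (fun _ => x) = (∑ i, x i ^ 2) * MvPolynomial.eval x Q) :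
    ∃ fΩ : (Fin 3 → ℝ) → ℝ, AnalyticAt ℝ fΩ 0 ∧ fΩ 0 = 1 ∧
      ∀ᶠ x in nhds (0 : Fin 3 → ℝ), Ω x = (∑ i, x i ^ 2) * fΩ x := by
  exact Omega_eq_r_sq_mul_analytic_general one_pos
    (fun x => by simpa using (norm_sq_le_sum_sq x).trans (le_abs_self _)) hΩ
    (iteratedFDeriv_apply_const_eq_zero_of_pd_eq_zero h0 h1)
    (iteratedFDeriv_two_apply_const_eq_two_mul_sum_sq hΩ.fderiv.differentiableAt h2)
    fun n hn => (htf n hn).imp' _ fun Q hQ => ⟨(AnalyticOnNhd.eval_mvPolynomial Q).contDiff, hQ⟩
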